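/- arXiv:2106.13653 — 2 statements merged into one kernel-verified Lean document; each statement's English description precedes it below -/
import Mathlib

section
/- Let k₁, k₂ ∈ ℚ and let f₁, f₂ : ℍ → ℂ be smooth functions such that f₁ is harmonic of weight k₁ (i.e. Δ_{k₁} f₁ = 0) and f₂ is holomorphic. Then for every r ∈ ℕ one has the pointwise identities on ℍ: L([f₁, f₂]_r) = C(k₁+r−1, r) · (L f₁) · (R̃^r_{k₂} f₂) = C(k₁+r−1, r) · R̃^r_{k₁+k₂−2}( L(f₁ f₂) ), where the Rankin–Cohen bracket is formed with the weights (k₁, k₂). -/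
/-!
Everything takes place on the open upper half-plane, where all functions involved are smooth.

Symmetry of second derivatives gives `∂_τ̄ ∂_τ = ∂_τ ∂_τ̄`, and hence the commutation relation
`L ∘ R_k = R_{k-2} ∘ L - k` (`lowerOp_raiseOp`). If `R_{k-2} (L f) = 0`, induction yields
`L (R̃^{n+1} f) = -(n+1)(k+n)/(4π) · R̃^n f` (`lowerOp_nraiseIter_succ`). This applies to the
harmonic `f₁` and also to the holomorphic `f₂`, whose image under `L` already vanishes.

As `L` is a derivation, `L [f₁, f₂]_r` is the sum of the term `s = r`, in which `L` hits the
unraised `f₁`, and of multiples of `R̃^{r-s-1} f₁ · R̃^s f₂` for `s < r`. Each of the latter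
occurs twice, with opposite coefficients, because `(n+1) C(x,n+1) = (x-n) C(x,n)`
(`gbinom_succ_mul`). This is the first identity.

For the second, `L (f₁ f₂) = (L f₁) f₂` since `f₂` is holomorphic, and the Leibniz rule
`R_{a+b} (F G) = (R_a F) G + F (R_b G)` with `a = k₁ - 2` and `R_{k₁-2} (L f₁) = 0` moves every
raising operator onto `f₂` (`nraiseIter_lower_mul`).
-/


open Complex

noncomputable section

/-- Wirtinger derivative `∂_τ f = (∂_u f − i ∂_v f)/2`. -/
def wdz (f : ℂ → ℂ) (z : ℂ) : ℂ := (fderiv ℝ f z 1 - I * fderiv ℝ f z I) / 2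

/-- Wirtinger derivative `∂_τ̄ f = (∂_u f + i ∂_v f)/2`. -/
def wdzbar (f : ℂ → ℂ) (z : ℂ) : ℂ := (fderiv ℝ f z 1 + I * fderiv ℝ f z I) / 2

/-- Raising operator `R_k f = 2i ∂_τ f + (k/v) f`. -/
def raiseOp (k : ℚ) (f : ℂ → ℂ) : ℂ → ℂ :=
  fun z => 2 * I * wdz f z + ((k : ℂ) / (z.im : ℂ)) * f z

/-- Normalized raising operator `R̃_k = (4π)⁻¹ R_k`. -/
def nraise (k : ℚ) (f : ℂ → ℂ) : ℂ → ℂ :=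
  fun z => (4 * (Real.pi : ℂ))⁻¹ * raiseOp k f z

/-- Iterated normalized raising operator `R̃ⁿ_k = R̃_{k+2(n−1)} ∘ ⋯ ∘ R̃_{k+2} ∘ R̃_k`. -/
def nraiseIter (k : ℚ) : ℕ → (ℂ → ℂ) → (ℂ → ℂ)
  | 0 => fun f => f
  | n + 1 => fun f => nraise (k + 2 * n) (nraiseIter k n f)

/-- Lowering operator `L f = −2i v² ∂_τ̄ f`. -/
def lowerOp (f : ℂ → ℂ) : ℂ → ℂ :=
  fun z => -2 * I * (z.im : ℂ) ^ 2 * wdzbar f z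

/-- Weight-`k` hyperbolic Laplacian `Δ_k = −R_{k−2} ∘ L`. -/
def laplOp (k : ℚ) (f : ℂ → ℂ) : ℂ → ℂ :=
  fun z => -(raiseOp (k - 2) (lowerOp f) z)

/-- Generalized binomial coefficient `C(x,n) = x(x−1)⋯(x−n+1)/n!`. -/
def gbinom (x : ℚ) (n : ℕ) : ℚ := (∏ i ∈ Finset.range n, (x - i)) / n.factorial

/-- Rankin–Cohen bracket `[f,g]_r` formed with the weights `(k, ℓ)`. -/
def rcBracket (k ℓ : ℚ) (r : ℕ) (f g : ℂ → ℂ) : ℂ → ℂ :=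
  fun z => ∑ s ∈ Finset.range (r + 1),
    (-1 : ℂ) ^ (r - s) * ((gbinom (k + r - 1) s : ℚ) : ℂ) *
      ((gbinom (ℓ + r - 1) (r - s) : ℚ) : ℂ) *
      nraiseIter k (r - s) f z * nraiseIter ℓ s g z

/-- The open upper half-plane as a subset of `ℂ`. -/
def UHP : Set ℂ := {z : ℂ | 0 < z.im}

/-- Smoothness (in the real sense) on the upper half-plane. -/
def SmoothUHP (f : ℂ → ℂ) : Prop := ContDiffOn ℝ (⊤ : ℕ∞) f UHP

lemma isOpen_UHP : IsOpen UHP := isOpen_lt continuous_const Complex.continuous_im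

/-! ### Wirtinger calculus on the upper half-plane -/

lemma SmoothUHP.differentiableAt {f : ℂ → ℂ} (hf : SmoothUHP f) {z : ℂ} (hz : z ∈ UHP) :
    DifferentiableAt ℝ f z :=
  (hf.contDiffAt (isOpen_UHP.mem_nhds hz)).differentiableAt (by simp)

lemma SmoothUHP.fderiv_apply {f : ℂ → ℂ} (hf : SmoothUHP f) (w : ℂ) :
    SmoothUHP (fun z => fderiv ℝ f z w) :=
  (hf.fderiv_of_isOpen isOpen_UHP (m := (⊤ : ℕ∞)) (by simp)).clm_apply contDiffOn_const

lemma SmoothUHP.const (c : ℂ) : SmoothUHP (fun _ => c) := contDiffOn_const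

lemma SmoothUHP.add {f g : ℂ → ℂ} (hf : SmoothUHP f) (hg : SmoothUHP g) :
    SmoothUHP (fun z => f z + g z) := ContDiffOn.add hf hg

lemma SmoothUHP.mul {f g : ℂ → ℂ} (hf : SmoothUHP f) (hg : SmoothUHP g) :
    SmoothUHP (fun z => f z * g z) := ContDiffOn.mul hf hg

lemma SmoothUHP.im : SmoothUHP (fun z => (z.im : ℂ)) :=
  (Complex.ofRealCLM.comp Complex.imCLM).contDiff.contDiffOn

lemma im_ne {z : ℂ} (hz : z ∈ UHP) : (z.im : ℂ) ≠ 0 :=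
  Complex.ofReal_ne_zero.mpr (ne_of_gt hz)

lemma SmoothUHP.inv_im : SmoothUHP (fun z => (z.im : ℂ)⁻¹) :=
  ContDiffOn.inv SmoothUHP.im (fun _ hz => im_ne hz)

lemma SmoothUHP.wdz {f : ℂ → ℂ} (hf : SmoothUHP f) : SmoothUHP (wdz f) := by
  have := (SmoothUHP.const (1 / 2)).mul
    ((hf.fderiv_apply 1).add ((SmoothUHP.const (-I)).mul (hf.fderiv_apply I)))
  refine ContDiffOn.congr this fun z _ => ?_
  simp only [_root_.wdz]; ring

lemma SmoothUHP.wdzbar {f : ℂ → ℂ} (hf : SmoothUHP f) : SmoothUHP (wdzbar f) := by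
  have := (SmoothUHP.const (1 / 2)).mul
    ((hf.fderiv_apply 1).add ((SmoothUHP.const I).mul (hf.fderiv_apply I)))
  refine ContDiffOn.congr this fun z _ => ?_
  simp only [_root_.wdzbar]; ring

lemma SmoothUHP.raiseOp {f : ℂ → ℂ} (hf : SmoothUHP f) (k : ℚ) : SmoothUHP (raiseOp k f) :=
  ((SmoothUHP.const (2 * I)).mul hf.wdz).add
    (((SmoothUHP.const (k : ℂ)).mul SmoothUHP.inv_im).mul hf)

lemma SmoothUHP.nraise {f : ℂ → ℂ} (hf : SmoothUHP f) (k : ℚ) : SmoothUHP (nraise k f) :=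
  (SmoothUHP.const _).mul (hf.raiseOp k)

lemma SmoothUHP.nraiseIter {f : ℂ → ℂ} (hf : SmoothUHP f) (k : ℚ) (n : ℕ) :
    SmoothUHP (nraiseIter k n f) := by
  induction n with
  | zero => exact hf
  | succ n ih => exact ih.nraise _

lemma SmoothUHP.lowerOp {f : ℂ → ℂ} (hf : SmoothUHP f) : SmoothUHP (lowerOp f) :=
  ((SmoothUHP.const (-2 * I)).mul (ContDiffOn.pow SmoothUHP.im 2)).mul hf.wdzbar

lemma fderiv_congr_UHP {f g : ℂ → ℂ} (h : ∀ z ∈ UHP, f z = g z) {z : ℂ} (hz : z ∈ UHP) :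
    fderiv ℝ f z = fderiv ℝ g z :=
  Filter.EventuallyEq.fderiv_eq
    (Filter.eventually_of_mem (isOpen_UHP.mem_nhds hz) h)

lemma wdz_congr {f g : ℂ → ℂ} (h : ∀ z ∈ UHP, f z = g z) {z : ℂ} (hz : z ∈ UHP) :
    wdz f z = wdz g z := by
  simp only [wdz, fderiv_congr_UHP h hz]

lemma wdzbar_congr {f g : ℂ → ℂ} (h : ∀ z ∈ UHP, f z = g z) {z : ℂ} (hz : z ∈ UHP) :
    wdzbar f z = wdzbar g z := by
  simp only [wdzbar, fderiv_congr_UHP h hz]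

lemma raiseOp_congr {f g : ℂ → ℂ} (h : ∀ z ∈ UHP, f z = g z) (k : ℚ) {z : ℂ} (hz : z ∈ UHP) :
    raiseOp k f z = raiseOp k g z := by
  simp only [raiseOp, wdz_congr h hz, h z hz]

lemma wdz_add {f g : ℂ → ℂ} {z : ℂ} (hf : DifferentiableAt ℝ f z) (hg : DifferentiableAt ℝ g z) :
    wdz (fun w => f w + g w) z = wdz f z + wdz g z := by
  simp only [wdz, fderiv_fun_add hf hg, add_apply]; ring

lemma wdzbar_add {f g : ℂ → ℂ} {z : ℂ} (hf : DifferentiableAt ℝ f z)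
    (hg : DifferentiableAt ℝ g z) :
    wdzbar (fun w => f w + g w) z = wdzbar f z + wdzbar g z := by
  simp only [wdzbar, fderiv_fun_add hf hg, add_apply]; ring

lemma wdz_mul {f g : ℂ → ℂ} {z : ℂ} (hf : DifferentiableAt ℝ f z) (hg : DifferentiableAt ℝ g z) :
    wdz (fun w => f w * g w) z = wdz f z * g z + f z * wdz g z := by
  simp only [wdz, fderiv_fun_mul hf hg, add_apply,
    smul_apply, smul_eq_mul]; ring

lemma wdzbar_mul {f g : ℂ → ℂ} {z : ℂ} (hf : DifferentiableAt ℝ f z)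
    (hg : DifferentiableAt ℝ g z) :
    wdzbar (fun w => f w * g w) z = wdzbar f z * g z + f z * wdzbar g z := by
  simp only [wdzbar, fderiv_fun_mul hf hg, add_apply,
    smul_apply, smul_eq_mul]; ring

lemma wdz_const (c z : ℂ) : wdz (fun _ => c) z = 0 := by simp [wdz]

lemma wdzbar_const (c z : ℂ) : wdzbar (fun _ => c) z = 0 := by simp [wdzbar]

lemma fderiv_im (z : ℂ) :
    fderiv ℝ (fun w : ℂ => (w.im : ℂ)) z = Complex.ofRealCLM.comp Complex.imCLM :=
  (Complex.ofRealCLM.comp Complex.imCLM).fderiv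

lemma wdz_im (z : ℂ) : wdz (fun w => (w.im : ℂ)) z = -I / 2 := by
  simp [wdz, fderiv_im]

lemma wdzbar_im (z : ℂ) : wdzbar (fun w => (w.im : ℂ)) z = I / 2 := by
  simp [wdzbar, fderiv_im]

lemma wdzbar_inv_im {z : ℂ} (hz : z ∈ UHP) :
    wdzbar (fun w => (w.im : ℂ)⁻¹) z = -(I / 2) / (z.im : ℂ) ^ 2 := by
  -- Apply the product rule to `v · v⁻¹ = 1`.
  have h := wdzbar_mul (SmoothUHP.im.differentiableAt hz) (SmoothUHP.inv_im.differentiableAt hz)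
  rw [wdzbar_congr (g := fun _ => 1) (fun w hw => mul_inv_cancel₀ (im_ne hw)) hz,
    wdzbar_const, wdzbar_im] at h
  have := im_ne hz
  field_simp at h ⊢
  linear_combination -h

lemma fderiv_fderiv_apply {f : ℂ → ℂ} (hf : SmoothUHP f) {z : ℂ} (hz : z ∈ UHP) (v w : ℂ) :
    fderiv ℝ (fun y => fderiv ℝ f y v) z w = fderiv ℝ (fderiv ℝ f) z w v := by
  have hd : DifferentiableAt ℝ (fderiv ℝ f) z :=
    ((hf.fderiv_of_isOpen isOpen_UHP (m := (⊤ : ℕ∞)) (by simp)).contDiffAt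
      (isOpen_UHP.mem_nhds hz)).differentiableAt (by simp)
  rw [fderiv_clm_apply hd (differentiableAt_const v)]
  simp

lemma fderiv_comm {f : ℂ → ℂ} (hf : SmoothUHP f) {z : ℂ} (hz : z ∈ UHP) (v w : ℂ) :
    fderiv ℝ (fun y => fderiv ℝ f y v) z w = fderiv ℝ (fun y => fderiv ℝ f y w) z v := by
  rw [fderiv_fderiv_apply hf hz, fderiv_fderiv_apply hf hz]
  exact ((hf.contDiffAt (isOpen_UHP.mem_nhds hz)).isSymmSndFDerivAt
    (by simpa using WithTop.coe_le_coe.mpr (le_top : (2 : ℕ∞) ≤ ⊤))) w v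

lemma wdzbar_wdz {f : ℂ → ℂ} (hf : SmoothUHP f) {z : ℂ} (hz : z ∈ UHP) :
    wdzbar (wdz f) z = wdz (wdzbar f) z := by
  have d1 := (hf.fderiv_apply 1).differentiableAt hz
  have dI := (hf.fderiv_apply I).differentiableAt hz
  have e1 : wdz f = fun y => (1 / 2) * (fderiv ℝ f y 1 + (-I) * fderiv ℝ f y I) := by
    funext y; simp only [wdz]; ring
  have e2 : wdzbar f = fun y => (1 / 2) * (fderiv ℝ f y 1 + I * fderiv ℝ f y I) := by
    funext y; simp only [wdzbar]; ring
  rw [e1, e2, wdzbar_mul (by fun_prop) (by fun_prop), wdz_mul (by fun_prop) (by fun_prop),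
    wdzbar_add d1 (by fun_prop), wdz_add d1 (by fun_prop), wdzbar_mul (by fun_prop) dI,
    wdz_mul (by fun_prop) dI]
  simp only [wdzbar_const, wdz_const]
  simp only [wdz, wdzbar, fderiv_comm hf hz I 1]
  ring

/-! ### Raising and lowering operators -/

/-- The commutation relation `L ∘ R_k = R_{k-2} ∘ L - k`. -/
lemma lowerOp_raiseOp {f : ℂ → ℂ} (hf : SmoothUHP f) (k : ℚ) {z : ℂ} (hz : z ∈ UHP) :
    lowerOp (raiseOp k f) z = raiseOp (k - 2) (lowerOp f) z - (k : ℂ) * f z := by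
  have df := hf.differentiableAt hz
  have dw := hf.wdz.differentiableAt hz
  have dwb := hf.wdzbar.differentiableAt hz
  have di := SmoothUHP.im.differentiableAt hz
  have dii := SmoothUHP.inv_im.differentiableAt hz
  have e1 : raiseOp k f = fun y => 2 * I * wdz f y + (k : ℂ) * (((y.im : ℂ)⁻¹) * f y) := by
    funext y; simp only [raiseOp]; ring
  have e2 : lowerOp f = fun y => -2 * I * (((y.im : ℂ) * (y.im : ℂ)) * wdzbar f y) := by
    funext y; simp only [lowerOp]; ring
  have h1 : wdzbar (raiseOp k f) z = 2 * I * wdzbar (wdz f) z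
      + (k : ℂ) * (-(I / 2) / (z.im : ℂ) ^ 2 * f z + (z.im : ℂ)⁻¹ * wdzbar f z) := by
    rw [e1, wdzbar_add ((differentiableAt_const _).fun_mul dw)
        ((differentiableAt_const _).fun_mul (dii.fun_mul df)),
      wdzbar_mul (differentiableAt_const _) dw,
      wdzbar_mul (differentiableAt_const _) (dii.fun_mul df), wdzbar_mul dii df, wdzbar_inv_im hz]
    simp only [wdzbar_const]; ring
  have h2 : wdz (lowerOp f) z = -2 * I * ((-I * z.im) * wdzbar f z
      + (z.im : ℂ) ^ 2 * wdz (wdzbar f) z) := by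
    rw [e2, wdz_mul (differentiableAt_const _) ((di.fun_mul di).fun_mul dwb),
      wdz_mul (di.fun_mul di) dwb, wdz_mul di di, wdz_im]
    simp only [wdz_const]; ring
  have hv := im_ne hz
  have eL : lowerOp f z = -2 * I * (z.im : ℂ) ^ 2 * wdzbar f z := rfl
  have eLR : lowerOp (raiseOp k f) z = -2 * I * (z.im : ℂ) ^ 2 * wdzbar (raiseOp k f) z := rfl
  have eRL : raiseOp (k - 2) (lowerOp f) z =
    2 * I * wdz (lowerOp f) z + (((k - 2 : ℚ) : ℂ) / (z.im : ℂ)) * lowerOp f z := rfl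
  rw [eLR, eRL, h1, h2, eL, wdzbar_wdz hf hz]
  push_cast
  field_simp
  ring_nf
  simp only [I_sq, I_pow_three]
  ring

lemma raiseOp_const_mul {f : ℂ → ℂ} (hf : SmoothUHP f) (k : ℚ) (c : ℂ) {z : ℂ} (hz : z ∈ UHP) :
    raiseOp k (fun w => c * f w) z = c * raiseOp k f z := by
  simp only [raiseOp]
  rw [wdz_mul (differentiableAt_const _) (hf.differentiableAt hz), wdz_const]; ring

lemma lowerOp_mul {f g : ℂ → ℂ} (hf : SmoothUHP f) (hg : SmoothUHP g) {z : ℂ} (hz : z ∈ UHP) :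
    lowerOp (fun w => f w * g w) z = lowerOp f z * g z + f z * lowerOp g z := by
  simp only [lowerOp]
  rw [wdzbar_mul (hf.differentiableAt hz) (hg.differentiableAt hz)]; ring

lemma lowerOp_const_mul {f : ℂ → ℂ} (hf : SmoothUHP f) (c : ℂ) {z : ℂ} (hz : z ∈ UHP) :
    lowerOp (fun w => c * f w) z = c * lowerOp f z := by
  rw [lowerOp_mul (SmoothUHP.const c) hf hz]
  simp [lowerOp, wdzbar_const]

lemma smoothUHP_sum {F : ℕ → ℂ → ℂ} (hF : ∀ s, SmoothUHP (F s)) (n : ℕ) :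
    SmoothUHP (fun w => ∑ s ∈ Finset.range n, F s w) :=
  ContDiffOn.sum fun s _ => hF s

lemma lowerOp_sum {F : ℕ → ℂ → ℂ} (hF : ∀ s, SmoothUHP (F s)) (n : ℕ) {z : ℂ} (hz : z ∈ UHP) :
    lowerOp (fun w => ∑ s ∈ Finset.range n, F s w) z = ∑ s ∈ Finset.range n, lowerOp (F s) z := by
  induction n with
  | zero => simp [lowerOp, wdzbar_const]
  | succ n ih =>
    simp only [Finset.sum_range_succ, ← ih]
    simp only [lowerOp]
    rw [wdzbar_add ((smoothUHP_sum hF n).differentiableAt hz) ((hF n).differentiableAt hz)]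
    ring

/-- Iterated raising of a harmonic function, followed by lowering. -/
lemma lowerOp_nraiseIter_succ {f : ℂ → ℂ} (hf : SmoothUHP f) (k : ℚ)
    (hh : ∀ z ∈ UHP, raiseOp (k - 2) (lowerOp f) z = 0) (n : ℕ) :
    ∀ z ∈ UHP, lowerOp (nraiseIter k (n + 1) f) z =
      -(((n : ℂ) + 1) * ((k : ℂ) + n) * (4 * (Real.pi : ℂ))⁻¹) * nraiseIter k n f z := by
  induction n with
  | zero =>
    intro z hz
    have : nraiseIter k (0 + 1) f = fun w => (4 * (Real.pi : ℂ))⁻¹ * raiseOp k f w := by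
      funext w; simp [nraiseIter, nraise]
    rw [this, lowerOp_const_mul (hf.raiseOp k) _ hz, lowerOp_raiseOp hf k hz, hh z hz]
    simp [nraiseIter]; ring
  | succ n ih =>
    intro z hz
    have hF := hf.nraiseIter k (n + 1)
    have e : nraiseIter k (n + 1 + 1) f = fun w => (4 * (Real.pi : ℂ))⁻¹ *
      raiseOp (k + 2 * ((n + 1 : ℕ) : ℚ)) (nraiseIter k (n + 1) f) w := rfl
    have hw : k + 2 * ((n + 1 : ℕ) : ℚ) - 2 = k + 2 * (n : ℚ) := by push_cast; ring
    rw [e, lowerOp_const_mul (hF.raiseOp _) _ hz, lowerOp_raiseOp hF _ hz, hw,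
      raiseOp_congr ih _ hz, raiseOp_const_mul (hf.nraiseIter k n) _ _ hz]
    have e' : nraiseIter k (n + 1) f z =
      (4 * (Real.pi : ℂ))⁻¹ * raiseOp (k + 2 * (n : ℚ)) (nraiseIter k n f) z := rfl
    rw [e']
    push_cast
    ring

lemma raiseOp_mul {f g : ℂ → ℂ} (hf : SmoothUHP f) (hg : SmoothUHP g) (a b : ℚ) {z : ℂ}
    (hz : z ∈ UHP) :
    raiseOp (a + b) (fun w => f w * g w) z = raiseOp a f z * g z + f z * raiseOp b g z := by
  simp only [raiseOp]
  rw [wdz_mul (hf.differentiableAt hz) (hg.differentiableAt hz)]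
  push_cast; ring

/-- A factor annihilated by its raising operator passes through iterated raising. -/
lemma nraiseIter_lower_mul {h F g : ℂ → ℂ} (hF : SmoothUHP F) (hg : SmoothUHP g) (a b : ℚ)
    (hR : ∀ z ∈ UHP, raiseOp a F z = 0) (hh : ∀ z ∈ UHP, h z = F z * g z) (n : ℕ) :
    ∀ z ∈ UHP, nraiseIter (a + b) n h z = F z * nraiseIter b n g z := by
  induction n with
  | zero => exact hh
  | succ n ih =>
    intro z hz
    simp only [nraiseIter, nraise]
    rw [raiseOp_congr ih _ hz, add_assoc, raiseOp_mul hF (hg.nraiseIter b n) a _ hz, hR z hz]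
    ring

/-! ### Binomial coefficients and the bracket -/

lemma gbinom_succ_mul (x : ℚ) (n : ℕ) :
    ((n : ℚ) + 1) * gbinom x (n + 1) = (x - n) * gbinom x n := by
  have h1 : (n.factorial : ℚ) ≠ 0 := by exact_mod_cast n.factorial_ne_zero
  have h2 : (n : ℚ) + 1 ≠ 0 := by positivity
  simp only [gbinom, Finset.prod_range_succ, Nat.factorial_succ]
  push_cast
  field_simp

/-- The cancellation of the two contributions to the coefficient of `R̃^t f₁ · R̃^s f₂`, where
`s + t + 1 = r`. -/
lemma bracket_coeff_cancel (k l : ℚ) (s t : ℕ) :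
    gbinom (k + ((s + t + 1 : ℕ) : ℚ) - 1) s * gbinom (l + ((s + t + 1 : ℕ) : ℚ) - 1) (t + 1) *
        ((t + 1) * (k + t)) =
      gbinom (k + ((s + t + 1 : ℕ) : ℚ) - 1) (s + 1) *
        gbinom (l + ((s + t + 1 : ℕ) : ℚ) - 1) t * ((s + 1) * (l + s)) := by
  have h1 := gbinom_succ_mul (k + ((s + t + 1 : ℕ) : ℚ) - 1) s
  have h2 := gbinom_succ_mul (l + ((s + t + 1 : ℕ) : ℚ) - 1) t
  push_cast at *
  linear_combination gbinom (k + (s + t + 1) - 1) s * (k + t) * h2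
    - gbinom (l + (s + t + 1) - 1) t * (l + s) * h1

lemma lowerOp_rcBracket {f g : ℂ → ℂ} (hf : SmoothUHP f) (hg : SmoothUHP g) (k l : ℚ)
    (hharm : ∀ z ∈ UHP, raiseOp (k - 2) (lowerOp f) z = 0)
    (hhol : ∀ z ∈ UHP, lowerOp g z = 0) (r : ℕ) {z : ℂ} (hz : z ∈ UHP) :
    lowerOp (rcBracket k l r f g) z =
      ((gbinom (k + (r : ℚ) - 1) r : ℚ) : ℂ) * lowerOp f z * nraiseIter l r g z := by
  have hharm' : ∀ w ∈ UHP, raiseOp (l - 2) (lowerOp g) w = 0 := fun w hw => by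
    rw [raiseOp_congr (g := fun _ => 0) hhol _ hw]
    simp [raiseOp, wdz_const]
  have e : rcBracket k l r f g = fun w => ∑ s ∈ Finset.range (r + 1),
      ((-1 : ℂ) ^ (r - s) * ((gbinom (k + r - 1) s : ℚ) : ℂ) *
        ((gbinom (l + r - 1) (r - s) : ℚ) : ℂ)) *
        (nraiseIter k (r - s) f w * nraiseIter l s g w) := by
    funext w; simp only [rcBracket, mul_assoc]
  have hs : ∀ s, SmoothUHP fun w => nraiseIter k (r - s) f w * nraiseIter l s g w :=
    fun s => (hf.nraiseIter k _).mul (hg.nraiseIter l _)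
  rw [e, lowerOp_sum (fun s => (SmoothUHP.const _).mul (hs s)) _ hz]
  simp only [lowerOp_const_mul (hs _) _ hz,
    lowerOp_mul (hf.nraiseIter k _) (hg.nraiseIter l _) hz, mul_add, Finset.sum_add_distrib]
  -- The top term of the first sum is the claimed value; the bottom term of the second vanishes.
  rw [Finset.sum_range_succ, Finset.sum_range_succ' (fun s => _ * (_ * lowerOp _ z))]
  have h0 : lowerOp (nraiseIter l 0 g) z = 0 := hhol z hz
  have hb : gbinom (l + (r : ℚ) - 1) 0 = 1 := by simp [gbinom]
  have hc : ∀ s ∈ Finset.range r,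
      ((-1 : ℂ) ^ (r - s) * ((gbinom (k + r - 1) s : ℚ) : ℂ) *
        ((gbinom (l + r - 1) (r - s) : ℚ) : ℂ)) *
        (lowerOp (nraiseIter k (r - s) f) z * nraiseIter l s g z) =
      -(((-1 : ℂ) ^ (r - (s + 1)) * ((gbinom (k + r - 1) (s + 1) : ℚ) : ℂ) *
        ((gbinom (l + r - 1) (r - (s + 1)) : ℚ) : ℂ)) *
        (nraiseIter k (r - (s + 1)) f z * lowerOp (nraiseIter l (s + 1) g) z)) := by
    intro s hs
    obtain ⟨t, rfl⟩ : ∃ t, r = s + t + 1 :=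
      ⟨r - s - 1, by have := Finset.mem_range.mp hs; omega⟩
    have e1 : s + t + 1 - s = t + 1 := by omega
    have e2 : s + t + 1 - (s + 1) = t := by omega
    rw [e1, e2, lowerOp_nraiseIter_succ hf k hharm t z hz,
      lowerOp_nraiseIter_succ hg l hharm' s z hz]
    have hq := congrArg (fun q : ℚ => (q : ℂ)) (bracket_coeff_cancel k l s t)
    simp only [Rat.cast_mul, Rat.cast_add, Rat.cast_natCast, Rat.cast_one] at hq
    linear_combination (-1 : ℂ) ^ t * (4 * (Real.pi : ℂ))⁻¹ * nraiseIter k t f z *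
      nraiseIter l s g z * hq
  rw [Finset.sum_congr rfl hc, Finset.sum_neg_distrib, h0, Nat.sub_self, hb]
  simp only [nraiseIter]
  push_cast
  ring

/-- Equation (2.7) of the paper: the lowering operator applied to a Rankin–Cohen
bracket of a harmonic form and a holomorphic form. -/
theorem lower_rcBracket_harmonic_holomorphic (k₁ k₂ : ℚ) (f₁ f₂ : ℂ → ℂ)
    (hf₁ : ContDiffOn ℝ (⊤ : ℕ∞) f₁ {z : ℂ | 0 < z.im})
    (hf₂ : ContDiffOn ℝ (⊤ : ℕ∞) f₂ {z : ℂ | 0 < z.im})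
    (hharm : ∀ z : ℂ, 0 < z.im → laplOp k₁ f₁ z = 0)
    (hhol : ∀ z : ℂ, 0 < z.im → wdzbar f₂ z = 0)
    (r : ℕ) :
    ∀ z : ℂ, 0 < z.im →
      lowerOp (rcBracket k₁ k₂ r f₁ f₂) z =
        ((gbinom (k₁ + (r : ℚ) - 1) r : ℚ) : ℂ) * lowerOp f₁ z * nraiseIter k₂ r f₂ z ∧
      lowerOp (rcBracket k₁ k₂ r f₁ f₂) z =
        ((gbinom (k₁ + (r : ℚ) - 1) r : ℚ) : ℂ) *
          nraiseIter (k₁ + k₂ - 2) r (lowerOp (fun w => f₁ w * f₂ w)) z := by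
  intro z hz
  have hs₁ : SmoothUHP f₁ := hf₁
  have hs₂ : SmoothUHP f₂ := hf₂
  have hR : ∀ w ∈ UHP, raiseOp (k₁ - 2) (lowerOp f₁) w = 0 := fun w hw =>
    neg_eq_zero.mp (hharm w hw)
  have hL : ∀ w ∈ UHP, lowerOp f₂ w = 0 := fun w hw => by
    simp only [lowerOp, hhol w hw, mul_zero]
  have h1 := lowerOp_rcBracket hs₁ hs₂ k₁ k₂ hR hL r (z := z) hz
  have h2 := nraiseIter_lower_mul (h := lowerOp fun w => f₁ w * f₂ w) hs₁.lowerOp hs₂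
    (k₁ - 2) k₂ hR
    (fun w hw => by rw [lowerOp_mul hs₁ hs₂ hw, hL w hw, mul_zero, add_zero]) r z hz
  refine ⟨h1, ?_⟩
  rw [h1, show k₁ + k₂ - 2 = k₁ - 2 + k₂ by ring, h2]
  ring
end
end

section
/- Let κ = (k₁, k₂) ∈ ℤ² and r ∈ ℕ. For every smooth function f : ℍ² → ℂ and every γ = (a b; c d) ∈ SL₂(ℝ), one has (C_{κ,r}(f)) |_{k₁+k₂+2r} γ = C_{κ,r}( f |_κ (γ, γ) ) as functions on ℍ, where (F|_k γ)(τ) := (cτ+d)^{−k} F(γτ) for F : ℍ → ℂ, and (f|_κ(γ,γ))(τ₁, τ₂) := (cτ₁+d)^{−k₁} (cτ₂+d)^{−k₂} f(γτ₁, γτ₂). -/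
/-!
The Rankin–Cohen operator is equivariant because every unwanted term in the derivatives of
`f|(γ,γ)` carries an alternating sum of binomial coefficients.

Write `j = cτ + d`. Since `γ` acts holomorphically with `∂(γτ) = j⁻²`, the Wirtinger derivative
of `j^k · (g ∘ γ)` involves only the Wirtinger derivative of `g`, even when `g` is merely
real-smooth (`wdz_mul_comp`). By induction (`wdz_iter_slash`),
`∂ⁿ(g|_k γ) = ∑ₘ binom n m · (k+m)⋯(k+n-1) · (-c)^(n-m) · j^(-k-n-m) · (∂ᵐ g) ∘ γ`.
Applying this in each variable (`iter_slash_two`) and restricting to the diagonal, the coefficient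
of `(∂₁ᵐ ∂₂ˡ f)(γτ, γτ)` in `C_{κ,r}(f|_κ(γ,γ))` is a power of `j` times a sum over `s`.
With `N = r - m - l` and `s = l + q`, the rising factorials coming from the slash action and those
in the Rankin–Cohen coefficients telescope to products independent of `q`, so that the sum over `s`
is a constant times `∑_q (-1)^q binom N q` (`rcCoeff_mul`). It vanishes unless `N = 0`
(`sum_rcCoeff`), and the terms with `m + l = r` are those of `C_{κ,r}(f)`, with the common factor
`j^(-k₁-k₂-2r)`.
-/

open Complex

noncomputable section

/-- Wirtinger derivative in the first variable of a function on `ℍ²`. -/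
def wdz1 (f : ℂ → ℂ → ℂ) : ℂ → ℂ → ℂ := fun z w => wdz (fun z' => f z' w) z

/-- Wirtinger derivative in the second variable of a function on `ℍ²`. -/
def wdz2 (f : ℂ → ℂ → ℂ) : ℂ → ℂ → ℂ := fun z w => wdz (fun w' => f z w') w

/-- Rankin–Cohen operator `C_{(k₁,k₂),r}` on functions of two variables. -/
def rcOp (k₁ k₂ : ℚ) (r : ℕ) (f : ℂ → ℂ → ℂ) : ℂ → ℂ :=
  fun τ => ((2 * (Real.pi : ℂ) * I) ^ r)⁻¹ *
    ∑ s ∈ Finset.range (r + 1),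
      (-1 : ℂ) ^ s * ((gbinom (k₁ + (r : ℚ) - 1) s : ℚ) : ℂ) *
        ((gbinom (k₂ + (r : ℚ) - 1) (r - s) : ℚ) : ℂ) *
        (wdz1^[r - s] (wdz2^[s] f)) τ τ

/-- Möbius action of `γ ∈ SL₂(ℝ)` on the upper half-plane (as a subset of `ℂ`). -/
def moeb (γ : Matrix.SpecialLinearGroup (Fin 2) ℝ) (τ : ℂ) : ℂ :=
  (((γ : Matrix (Fin 2) (Fin 2) ℝ) 0 0 : ℝ) * τ + ((γ : Matrix (Fin 2) (Fin 2) ℝ) 0 1 : ℝ)) /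
    (((γ : Matrix (Fin 2) (Fin 2) ℝ) 1 0 : ℝ) * τ + ((γ : Matrix (Fin 2) (Fin 2) ℝ) 1 1 : ℝ))

/-- Automorphy factor `j(γ, τ) = cτ + d`. -/
def jfac (γ : Matrix.SpecialLinearGroup (Fin 2) ℝ) (τ : ℂ) : ℂ :=
  ((γ : Matrix (Fin 2) (Fin 2) ℝ) 1 0 : ℝ) * τ + ((γ : Matrix (Fin 2) (Fin 2) ℝ) 1 1 : ℝ)

/-- Weight-`k` slash action `(F|_k γ)(τ) = (cτ+d)^{−k} F(γτ)`. -/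
def slashC (k : ℤ) (γ : Matrix.SpecialLinearGroup (Fin 2) ℝ) (F : ℂ → ℂ) : ℂ → ℂ :=
  fun τ => jfac γ τ ^ (-k) * F (moeb γ τ)

/-! ### One-variable Wirtinger calculus on the upper half-plane -/

/-- The upper half-plane as an open subset of `ℂ`. -/
def upperSet : Set ℂ := {z | 0 < z.im}

lemma isOpen_upperSet : IsOpen upperSet :=
  isOpen_lt continuous_const Complex.continuous_im

/-- Real-smoothness on the upper half-plane. -/
def SmoothH (g : ℂ → ℂ) : Prop := ContDiffOn ℝ (⊤ : ℕ∞) g upperSet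

lemma SmoothH.differentiableAt {g : ℂ → ℂ} (hg : SmoothH g) {z : ℂ} (hz : z ∈ upperSet) :
    DifferentiableAt ℝ g z :=
  (hg.contDiffAt (isOpen_upperSet.mem_nhds hz)).differentiableAt (by simp)

lemma SmoothH.congr {g h : ℂ → ℂ} (hg : SmoothH g) (e : Set.EqOn h g upperSet) : SmoothH h :=
  ContDiffOn.congr hg e

lemma wdz_congr_s8 {g h : ℂ → ℂ} (e : Set.EqOn g h upperSet) :
    Set.EqOn (wdz g) (wdz h) upperSet := by
  intro z hz
  have : g =ᶠ[nhds z] h := e.eventuallyEq_of_mem (isOpen_upperSet.mem_nhds hz)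
  simp only [wdz, this.fderiv_eq]

lemma wdz_iter_congr {g h : ℂ → ℂ} (e : Set.EqOn g h upperSet) (n : ℕ) :
    Set.EqOn (wdz^[n] g) (wdz^[n] h) upperSet := by
  induction n with
  | zero => exact e
  | succ n ih =>
    rw [Function.iterate_succ_apply', Function.iterate_succ_apply']
    exact wdz_congr_s8 ih

lemma SmoothH.wdz {g : ℂ → ℂ} (hg : SmoothH g) : SmoothH (wdz g) := by
  have h1 : ContDiffOn ℝ (⊤ : ℕ∞) (fderiv ℝ g) upperSet :=
    ContDiffOn.fderiv_of_isOpen hg isOpen_upperSet (by simp)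
  have h2 : ∀ v : ℂ, ContDiffOn ℝ (⊤ : ℕ∞) (fun z => fderiv ℝ g z v) upperSet :=
    fun v => h1.clm_apply contDiffOn_const
  exact ((h2 1).sub (contDiffOn_const.mul (h2 I))).div_const 2

lemma SmoothH.wdz_iter {g : ℂ → ℂ} (hg : SmoothH g) (n : ℕ) : SmoothH (_root_.wdz^[n] g) := by
  induction n with
  | zero => exact hg
  | succ n ih =>
    rw [Function.iterate_succ_apply']
    exact ih.wdz

lemma wdz_sum {ι : Type*} (S : Finset ι) (a : ι → ℂ) (g : ι → ℂ → ℂ) {z : ℂ}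
    (hg : ∀ i ∈ S, DifferentiableAt ℝ (g i) z) :
    wdz (fun z => ∑ i ∈ S, a i * g i z) z = ∑ i ∈ S, a i * wdz (g i) z := by
  have : HasFDerivAt (fun z => ∑ i ∈ S, a i * g i z) (∑ i ∈ S, a i • fderiv ℝ (g i) z) z :=
    HasFDerivAt.fun_sum fun i hi => (hg i hi).hasFDerivAt.const_mul (a i)
  simp only [wdz, this.fderiv, sum_apply, smul_apply,
    smul_eq_mul, Finset.mul_sum, ← Finset.sum_sub_distrib, Finset.sum_div]
  refine Finset.sum_congr rfl fun i _ => ?_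
  ring

lemma wdz_iter_sum {ι : Type*} (S : Finset ι) (a : ι → ℂ) (g : ι → ℂ → ℂ)
    (hg : ∀ i ∈ S, SmoothH (g i)) (n : ℕ) :
    Set.EqOn (wdz^[n] (fun z => ∑ i ∈ S, a i * g i z))
      (fun z => ∑ i ∈ S, a i * (wdz^[n] (g i)) z) upperSet := by
  induction n with
  | zero => exact fun _ _ => rfl
  | succ n ih =>
    intro z hz
    simp only [Function.iterate_succ_apply']
    rw [wdz_congr_s8 ih hz]
    exact wdz_sum S a _ fun i hi => ((hg i hi).wdz_iter n).differentiableAt hz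

/-- The holomorphic Wirtinger derivative of a holomorphic multiple `h · (g ∘ m)` of a
holomorphic pullback: no antiholomorphic derivative of `g` appears. -/
lemma wdz_mul_comp {h m g : ℂ → ℂ} {h' m' z : ℂ} (hh : HasDerivAt h h' z)
    (hm : HasDerivAt m m' z) (hg : DifferentiableAt ℝ g (m z)) :
    wdz (fun z => h z * g (m z)) z = h' * g (m z) + h z * m' * wdz g (m z) := by
  have H1 := hh.hasFDerivAt.restrictScalars ℝ
  have H2 := hm.hasFDerivAt.restrictScalars ℝ
  have H3 : HasFDerivAt (fun z => g (m z)) _ z := hg.hasFDerivAt.comp z H2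
  have H := H1.mul H3
  have key : ∀ L : ℂ →L[ℝ] ℂ, ∀ v : ℂ, L v = v.re * L 1 + v.im * L I := by
    intro L v
    have hv : v = v.re • (1 : ℂ) + v.im • I := by
      simp [Complex.re_add_im]
    conv_lhs => rw [hv, map_add, map_smul, map_smul]
    simp
  have e : wdz (fun z => h z * g (m z)) z = wdz (h * fun z => g (m z)) z := rfl
  rw [e]
  simp only [wdz, H.fderiv]
  simp only [add_apply, smul_apply, smul_eq_mul,
    ContinuousLinearMap.comp_apply, ContinuousLinearMap.coe_restrictScalars',
    ContinuousLinearMap.toSpanSingleton_apply, one_mul]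
  rw [key (fderiv ℝ g (m z)) m', key (fderiv ℝ g (m z)) (I * m')]
  conv_rhs => rw [← Complex.re_add_im m']
  simp only [Complex.mul_re, Complex.mul_im, Complex.I_re, Complex.I_im]
  push_cast
  ring_nf
  simp only [Complex.I_sq]
  ring

/-! ### The Möbius action -/

section moebius

variable (γ : Matrix.SpecialLinearGroup (Fin 2) ℝ)

/-- The lower-left entry of `γ`, as a complex number. -/
def lowerC : ℂ := ((γ : Matrix (Fin 2) (Fin 2) ℝ) 1 0 : ℝ)

lemma det_entries : (γ : Matrix (Fin 2) (Fin 2) ℝ) 0 0 * (γ : Matrix (Fin 2) (Fin 2) ℝ) 1 1 -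
    (γ : Matrix (Fin 2) (Fin 2) ℝ) 0 1 * (γ : Matrix (Fin 2) (Fin 2) ℝ) 1 0 = 1 := by
  rw [← Matrix.det_fin_two]; exact γ.det_coe

lemma jfac_ne_zero {z : ℂ} (hz : z ∈ upperSet) : jfac γ z ≠ 0 := by
  intro h
  have hz' : 0 < z.im := hz
  have hd := det_entries γ
  have h1 := congrArg Complex.im h
  have h2 := congrArg Complex.re h
  simp [jfac, hz'.ne'] at h1
  simp [jfac, h1] at h2
  simp [h1, h2] at hd

lemma moeb_mem {z : ℂ} (hz : z ∈ upperSet) : moeb γ z ∈ upperSet := by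
  have hz' : 0 < z.im := hz
  have hd := det_entries γ
  have hj : 0 < Complex.normSq (jfac γ z) := Complex.normSq_pos.2 (jfac_ne_zero γ hz)
  have : (moeb γ z).im = z.im / Complex.normSq (jfac γ z) := by
    change (_ / jfac γ z : ℂ).im = _
    rw [Complex.div_im, ← sub_div]
    congr 1
    simp [jfac]
    linear_combination z.im * hd
  change 0 < (moeb γ z).im
  rw [this]
  positivity

lemma hasDerivAt_jfac (z : ℂ) : HasDerivAt (jfac γ) (lowerC γ) z := by
  have := ((hasDerivAt_id z).const_mul (lowerC γ)).add_const
    (((γ : Matrix (Fin 2) (Fin 2) ℝ) 1 1 : ℝ) : ℂ)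
  exact this.congr_deriv (mul_one _)

lemma hasDerivAt_jfac_zpow {z : ℂ} (hz : z ∈ upperSet) (k : ℤ) :
    HasDerivAt (fun z => jfac γ z ^ k) (k * lowerC γ * jfac γ z ^ (k - 1)) z := by
  have := (hasDerivAt_zpow k (jfac γ z) (Or.inl (jfac_ne_zero γ hz))).comp z (hasDerivAt_jfac γ z)
  exact this.congr_deriv (by ring)

lemma hasDerivAt_moeb {z : ℂ} (hz : z ∈ upperSet) :
    HasDerivAt (moeb γ) (jfac γ z ^ (-2 : ℤ)) z := by
  have h1 := ((hasDerivAt_id z).const_mul (((γ : Matrix (Fin 2) (Fin 2) ℝ) 0 0 : ℝ) : ℂ)).add_const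
    (((γ : Matrix (Fin 2) (Fin 2) ℝ) 0 1 : ℝ) : ℂ)
  have h2 := h1.div (hasDerivAt_jfac γ z) (jfac_ne_zero γ hz)
  have hd : (_ : ℂ) = _ := congrArg Complex.ofReal (det_entries γ)
  push_cast at hd
  refine h2.congr_deriv ?_
  symm
  rw [zpow_neg, inv_eq_one_div]
  congr 1
  simp only [jfac, lowerC, id]
  linear_combination -hd

lemma smoothH_zpow_mul_comp {g : ℂ → ℂ} (hg : SmoothH g) (k : ℤ) :
    SmoothH (fun z => jfac γ z ^ k * g (moeb γ z)) := by
  have hj : DifferentiableOn ℂ (fun z => jfac γ z ^ k) upperSet := fun z hz =>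
    (hasDerivAt_jfac_zpow γ hz k).differentiableAt.differentiableWithinAt
  have hm : DifferentiableOn ℂ (moeb γ) upperSet := fun z hz =>
    (hasDerivAt_moeb γ hz).differentiableAt.differentiableWithinAt
  exact ((hj.contDiffOn isOpen_upperSet).restrict_scalars ℝ).mul
    (ContDiffOn.comp hg ((hm.contDiffOn isOpen_upperSet).restrict_scalars ℝ)
      fun z hz => moeb_mem γ hz)

end moebius

/-! ### Iterated derivatives of the slash action in one variable -/

/-- The coefficient `binom n m · (k+m)(k+m+1)⋯(k+n-1) · (-c)^(n-m)` of
`j^(-k-n-m) · (∂^m g) ∘ γ` in `∂^n (g|_k γ)`. It vanishes for `m > n`. -/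
def slashCoeff (c : ℂ) (k : ℤ) (n m : ℕ) : ℂ :=
  n.choose m * (∏ i ∈ Finset.Ico m n, ((k : ℂ) + i)) * (-c) ^ (n - m)

lemma slashCoeff_of_lt (c : ℂ) (k : ℤ) {n m : ℕ} (h : n < m) : slashCoeff c k n m = 0 := by
  simp [slashCoeff, Nat.choose_eq_zero_of_lt h]

lemma slashCoeff_succ_zero (c : ℂ) (k : ℤ) (n : ℕ) :
    slashCoeff c k (n + 1) 0 = -(k + n) * c * slashCoeff c k n 0 := by
  simp [slashCoeff, Finset.prod_range_succ, pow_succ]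
  ring

lemma slashCoeff_succ_succ (c : ℂ) (k : ℤ) (n m : ℕ) :
    slashCoeff c k (n + 1) (m + 1) =
      -(k + n + (m + 1 : ℕ)) * c * slashCoeff c k n (m + 1) + slashCoeff c k n m := by
  rcases lt_trichotomy m n with h | rfl | h
  · obtain ⟨p, rfl⟩ := Nat.exists_eq_add_of_lt h
    have hc := Nat.choose_succ_right_eq (m + p + 1) m
    have hc' : ((m + p + 1).choose (m + 1) : ℂ) * (m + 1) = (m + p + 1).choose m * (p + 1) := by
      have : m + p + 1 - m = p + 1 := by omega
      rw [this] at hc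
      exact_mod_cast hc
    simp only [slashCoeff]
    rw [Nat.choose_succ_succ, Finset.prod_Ico_succ_top (by omega),
      Finset.prod_eq_prod_Ico_succ_bot (show m < m + p + 1 by omega),
      show m + p + 1 + 1 - (m + 1) = p + 1 by omega, show m + p + 1 - (m + 1) = p by omega,
      show m + p + 1 - m = p + 1 by omega]
    push_cast
    generalize (∏ i ∈ Finset.Ico (m + 1) (m + p + 1), ((k : ℂ) + i)) = P
    rw [pow_succ]
    linear_combination P * (-c) ^ p * c * hc'
  · rw [slashCoeff_of_lt c k (Nat.lt_succ_self m)]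
    simp [slashCoeff]
  · rw [slashCoeff_of_lt c k h, slashCoeff_of_lt c k (by omega), slashCoeff_of_lt c k (by omega)]
    simp

/-- Bol-type formula for the iterated derivatives of `g|_k γ`. -/
lemma wdz_iter_slash (γ : Matrix.SpecialLinearGroup (Fin 2) ℝ) (k : ℤ) {g : ℂ → ℂ}
    (hg : SmoothH g) (n : ℕ) :
    Set.EqOn (wdz^[n] (fun z => jfac γ z ^ (-k) * g (moeb γ z)))
      (fun z => ∑ m ∈ Finset.range (n + 1), slashCoeff (lowerC γ) k n m *
        (jfac γ z ^ (-k - n - m) * (wdz^[m] g) (moeb γ z))) upperSet := by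
  induction n with
  | zero => intro z _; simp [slashCoeff]
  | succ n ih =>
    intro z hz
    have hj := jfac_ne_zero γ hz
    rw [Function.iterate_succ_apply', wdz_congr_s8 ih hz]
    rw [wdz_sum _ _ _ fun m _ =>
      (smoothH_zpow_mul_comp γ (hg.wdz_iter m) _).differentiableAt hz]
    have hstep : ∀ m : ℕ, slashCoeff (lowerC γ) k n m *
        wdz (fun z => jfac γ z ^ (-k - n - m) * (wdz^[m] g) (moeb γ z)) z =
        -(k + n + (m : ℕ)) * lowerC γ * slashCoeff (lowerC γ) k n m *
          (jfac γ z ^ (-k - (n + 1 : ℕ) - m) * (wdz^[m] g) (moeb γ z)) +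
        slashCoeff (lowerC γ) k n m * (jfac γ z ^ (-k - (n + 1 : ℕ) - (m + 1 : ℕ)) *
          (wdz^[m + 1] g) (moeb γ z)) := by
      intro m
      rw [wdz_mul_comp (hasDerivAt_jfac_zpow γ hz _) (hasDerivAt_moeb γ hz)
        ((hg.wdz_iter m).differentiableAt (moeb_mem γ hz)), Function.iterate_succ_apply',
        ← zpow_add₀ hj]
      have e1 : -k - (n : ℤ) - m - 1 = -k - (n + 1 : ℕ) - m := by push_cast; ring
      have e2 : -k - (n : ℤ) - m + -2 = -k - (n + 1 : ℕ) - (m + 1 : ℕ) := by push_cast; ring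
      rw [e1, e2]
      push_cast
      ring
    rw [Finset.sum_congr rfl fun m _ => hstep m, Finset.sum_add_distrib]
    simp only
    rw [Finset.sum_range_succ' _ (n + 1)]
    simp only [slashCoeff_succ_succ, slashCoeff_succ_zero, add_mul _ (slashCoeff _ _ _ _)]
    rw [Finset.sum_add_distrib]
    have hlast : ∀ F : ℕ → ℂ, ∑ m ∈ Finset.range (n + 1),
        -(k + n + (m : ℕ)) * lowerC γ * slashCoeff (lowerC γ) k n m * F m =
        ∑ m ∈ Finset.range (n + 1),
          -(k + n + (m + 1 : ℕ)) * lowerC γ * slashCoeff (lowerC γ) k n (m + 1) * F (m + 1) +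
        -(k + n) * lowerC γ * slashCoeff (lowerC γ) k n 0 * F 0 := by
      intro F
      rw [Finset.sum_range_succ', Finset.sum_range_succ _ n,
        slashCoeff_of_lt _ k (Nat.lt_succ_self n)]
      simp
    rw [hlast fun m => jfac γ z ^ (-k - (n + 1 : ℕ) - m) * (wdz^[m] g) (moeb γ z)]
    ring

/-! ### Two variables -/

/-- Real-smoothness on the product of two upper half-planes. -/
def SmoothHH (f : ℂ → ℂ → ℂ) : Prop :=
  ContDiffOn ℝ (⊤ : ℕ∞) (Function.uncurry f) {p : ℂ × ℂ | 0 < p.1.im ∧ 0 < p.2.im}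

lemma isOpen_HH : IsOpen {p : ℂ × ℂ | 0 < p.1.im ∧ 0 < p.2.im} :=
  (isOpen_lt continuous_const (Complex.continuous_im.comp continuous_fst)).inter
    (isOpen_lt continuous_const (Complex.continuous_im.comp continuous_snd))

lemma SmoothHH.slice1 {f : ℂ → ℂ → ℂ} (hf : SmoothHH f) {w : ℂ} (hw : w ∈ upperSet) :
    SmoothH (fun z => f z w) :=
  ContDiffOn.comp hf (f := fun z => (z, w)) (contDiff_id.prodMk contDiff_const).contDiffOn
    fun _ hz => ⟨hz, hw⟩

lemma SmoothHH.slice2 {f : ℂ → ℂ → ℂ} (hf : SmoothHH f) {z : ℂ} (hz : z ∈ upperSet) :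
    SmoothH (f z) :=
  ContDiffOn.comp hf (f := fun w => (z, w)) (contDiff_const.prodMk contDiff_id).contDiffOn
    fun _ hw => ⟨hz, hw⟩

lemma SmoothHH.wdz2 {f : ℂ → ℂ → ℂ} (hf : SmoothHH f) : SmoothHH (wdz2 f) := by
  have h1 : ContDiffOn ℝ (⊤ : ℕ∞) (fderiv ℝ (Function.uncurry f))
      {p : ℂ × ℂ | 0 < p.1.im ∧ 0 < p.2.im} :=
    ContDiffOn.fderiv_of_isOpen hf isOpen_HH (by simp)
  have h2 : ∀ v : ℂ × ℂ, ContDiffOn ℝ (⊤ : ℕ∞) (fun p => fderiv ℝ (Function.uncurry f) p v)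
      {p : ℂ × ℂ | 0 < p.1.im ∧ 0 < p.2.im} :=
    fun v => h1.clm_apply contDiffOn_const
  refine (((h2 (0, 1)).sub ((contDiffOn_const (c := I)).mul (h2 (0, I)))).div_const 2).congr ?_
  rintro ⟨z, w⟩ hp
  have hd : HasFDerivAt (Function.uncurry f) (fderiv ℝ (Function.uncurry f) (z, w)) (z, w) :=
    ((hf.contDiffAt (isOpen_HH.mem_nhds hp)).differentiableAt (by simp)).hasFDerivAt
  have := hd.comp w (hasFDerivAt_prodMk_right z w)
  have e : fderiv ℝ (fun w' => f z w') w = _ := this.fderiv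
  simp [Function.uncurry, _root_.wdz2, wdz, e]

lemma SmoothHH.wdz2_iter {f : ℂ → ℂ → ℂ} (hf : SmoothHH f) (n : ℕ) :
    SmoothHH (_root_.wdz2^[n] f) := by
  induction n with
  | zero => exact hf
  | succ n ih =>
    rw [Function.iterate_succ_apply']
    exact ih.wdz2

lemma wdz1_iter_apply (f : ℂ → ℂ → ℂ) (n : ℕ) (w : ℂ) :
    (fun z => (wdz1^[n] f) z w) = wdz^[n] (fun z => f z w) := by
  induction n with
  | zero => rfl
  | succ n ih =>
    simp only [Function.iterate_succ_apply', ← ih]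
    rfl

lemma wdz2_iter_apply (f : ℂ → ℂ → ℂ) (n : ℕ) (z : ℂ) :
    (wdz2^[n] f) z = wdz^[n] (f z) := by
  induction n with
  | zero => rfl
  | succ n ih =>
    simp only [Function.iterate_succ_apply', ← ih]
    rfl

lemma iter_slash_two (γ : Matrix.SpecialLinearGroup (Fin 2) ℝ) (k₁ k₂ : ℤ) {f : ℂ → ℂ → ℂ}
    (hf : SmoothHH f) (n s : ℕ) {z w : ℂ} (hz : z ∈ upperSet) (hw : w ∈ upperSet) :
    (wdz1^[n] (wdz2^[s] (fun τ₁ τ₂ => jfac γ τ₁ ^ (-k₁) * jfac γ τ₂ ^ (-k₂) *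
      f (moeb γ τ₁) (moeb γ τ₂)))) z w =
    ∑ l ∈ Finset.range (s + 1), ∑ m ∈ Finset.range (n + 1),
      slashCoeff (lowerC γ) k₂ s l * slashCoeff (lowerC γ) k₁ n m *
      (jfac γ w ^ (-k₂ - s - l) * jfac γ z ^ (-k₁ - n - m)) *
        (wdz1^[m] (wdz2^[l] f)) (moeb γ z) (moeb γ w) := by
  have h1 : Set.EqOn (fun z => (wdz2^[s] (fun τ₁ τ₂ => jfac γ τ₁ ^ (-k₁) * jfac γ τ₂ ^ (-k₂) *
      f (moeb γ τ₁) (moeb γ τ₂))) z w)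
      (fun z => ∑ l ∈ Finset.range (s + 1),
        (slashCoeff (lowerC γ) k₂ s l * jfac γ w ^ (-k₂ - s - l)) *
        (jfac γ z ^ (-k₁) * (fun z => (wdz2^[l] f) z (moeb γ w)) (moeb γ z))) upperSet := by
    intro z hz
    simp only [wdz2_iter_apply]
    have hg := hf.slice2 (moeb_mem γ hz)
    have h2 := wdz_iter_sum {()} (fun _ => jfac γ z ^ (-k₁))
      (fun _ z₂ => jfac γ z₂ ^ (-k₂) * f (moeb γ z) (moeb γ z₂))
      (fun _ _ => smoothH_zpow_mul_comp γ hg _) s hw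
    simp only [Finset.sum_singleton, ← mul_assoc] at h2
    rw [h2]
    have h3 := wdz_iter_slash γ k₂ hg s hw
    simp only at h3
    rw [h3, Finset.mul_sum]
    refine Finset.sum_congr rfl fun l _ => ?_
    ring
  have h4 := congrFun (wdz1_iter_apply (wdz2^[s] (fun τ₁ τ₂ => jfac γ τ₁ ^ (-k₁) *
    jfac γ τ₂ ^ (-k₂) * f (moeb γ τ₁) (moeb γ τ₂))) n w) z
  have hw' := moeb_mem γ hw
  rw [h4, wdz_iter_congr h1 n hz, wdz_iter_sum _ _ _ (fun l _ =>
    smoothH_zpow_mul_comp γ ((hf.wdz2_iter l).slice1 hw') _) n hz]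
  simp only
  refine Finset.sum_congr rfl fun l _ => ?_
  have h5 := wdz_iter_slash γ k₁ ((hf.wdz2_iter l).slice1 hw') n hz
  simp only at h5
  rw [h5, Finset.mul_sum]
  refine Finset.sum_congr rfl fun m _ => ?_
  rw [← wdz1_iter_apply]
  ring

/-! ### The binomial identity -/

lemma gbinom_shift (k : ℤ) {r s : ℕ} (hs : s ≤ r) :
    ((gbinom ((k : ℚ) + (r : ℚ) - 1) s : ℚ) : ℂ) =
      (∏ i ∈ Finset.Ico (r - s) r, ((k : ℂ) + i)) / s.factorial := by
  rw [gbinom]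
  push_cast
  congr 1
  rw [Finset.prod_Ico_eq_prod_range, show r - (r - s) = s by omega, ← Finset.prod_range_reflect]
  refine Finset.prod_congr rfl fun i hi => ?_
  have hi := Finset.mem_range.1 hi
  have : ((s - 1 - i : ℕ) : ℂ) + (i + 1) = s := by
    have : s - 1 - i + (i + 1) = s := by omega
    exact_mod_cast this
  rw [Nat.cast_add, Nat.cast_sub hs]
  linear_combination -this

/-- The coefficient of `∂₁^(r-s) ∂₂^s` in the Rankin–Cohen operator. -/
def rcCoeff (k₁ k₂ : ℤ) (r s : ℕ) : ℂ :=
  (-1 : ℂ) ^ s * ((gbinom ((k₁ : ℚ) + (r : ℚ) - 1) s : ℚ) : ℂ) *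
        ((gbinom ((k₂ : ℚ) + (r : ℚ) - 1) (r - s) : ℚ) : ℂ)

/-- Up to a factor independent of `q`, the contribution of `s = l + q` to the coefficient of
`∂₁^m ∂₂^l` is the signed binomial coefficient `(-1)^q binom N q`, where `N = r - m - l`. -/
lemma rcCoeff_mul (c : ℂ) (k₁ k₂ : ℤ) (m l N q : ℕ) (hq : q ≤ N) :
    rcCoeff k₁ k₂ (m + l + N) (l + q) * (slashCoeff c k₂ (l + q) l *
      slashCoeff c k₁ (m + l + N - (l + q)) m) =
    (-1) ^ l * (-c) ^ N * (∏ i ∈ Finset.Ico m (m + l + N), ((k₁ : ℂ) + i)) *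
      (∏ i ∈ Finset.Ico l (m + l + N), ((k₂ : ℂ) + i)) /
        (m.factorial * l.factorial * N.factorial) * ((-1) ^ q * N.choose q) := by
  obtain ⟨p, rfl⟩ := Nat.exists_eq_add_of_le hq
  rw [rcCoeff, gbinom_shift _ (by omega), gbinom_shift _ (by omega)]
  have e1 : m + l + (q + p) - (l + q) = m + p := by omega
  have e2 : m + l + (q + p) - (m + p) = l + q := by omega
  rw [e1, e2]
  simp only [slashCoeff]
  rw [← Finset.prod_Ico_consecutive _ (show m ≤ m + p by omega)
      (show m + p ≤ m + l + (q + p) by omega),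
    ← Finset.prod_Ico_consecutive _ (show l ≤ l + q by omega)
      (show l + q ≤ m + l + (q + p) by omega),
    Nat.add_sub_cancel_left, Nat.add_sub_cancel_left,
    Nat.cast_add_choose, Nat.cast_add_choose, Nat.cast_add_choose]
  have hfac : ∀ n : ℕ, (n.factorial : ℂ) ≠ 0 := fun n => by exact_mod_cast n.factorial_ne_zero
  have h1 := hfac m
  have h2 := hfac l
  have h3 := hfac p
  have h4 := hfac q
  have h5 := hfac (m + p)
  have h6 := hfac (l + q)
  have h7 := hfac (q + p)
  field_simp
  ring

lemma sum_rcCoeff (c : ℂ) (k₁ k₂ : ℤ) (r m l : ℕ) :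
    ∑ s ∈ Finset.range (r + 1), rcCoeff k₁ k₂ r s *
      (slashCoeff c k₂ s l * slashCoeff c k₁ (r - s) m) =
    if m + l = r then rcCoeff k₁ k₂ r l else 0 := by
  by_cases h : m + l ≤ r
  · obtain ⟨N, rfl⟩ := Nat.exists_eq_add_of_le h
    have hsub : ∑ s ∈ Finset.range (m + l + N + 1), rcCoeff k₁ k₂ (m + l + N) s *
        (slashCoeff c k₂ s l * slashCoeff c k₁ (m + l + N - s) m) =
        ∑ q ∈ Finset.range (N + 1), rcCoeff k₁ k₂ (m + l + N) (l + q) *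
        (slashCoeff c k₂ (l + q) l * slashCoeff c k₁ (m + l + N - (l + q)) m) := by
      have := Finset.sum_Ico_eq_sum_range (fun s => rcCoeff k₁ k₂ (m + l + N) s *
        (slashCoeff c k₂ s l * slashCoeff c k₁ (m + l + N - s) m)) l (l + (N + 1))
      rw [Nat.add_sub_cancel_left] at this
      rw [← this]
      symm
      refine Finset.sum_subset (fun s hs => ?_) fun s hs hs' => ?_
      · rw [Finset.mem_Ico] at hs
        rw [Finset.mem_range]
        omega
      · rw [Finset.mem_Ico] at hs'
        rw [Finset.mem_range] at hs
        rcases Nat.lt_or_ge s l with h1 | h1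
        · rw [slashCoeff_of_lt _ _ h1]; simp
        · rw [slashCoeff_of_lt c k₁ (show m + l + N - s < m by omega)]; simp
    rw [hsub]
    rcases Nat.eq_zero_or_pos N with rfl | hN
    · simp [slashCoeff]
    · rw [if_neg (by omega), Finset.sum_congr rfl fun q hq =>
        rcCoeff_mul c k₁ k₂ m l N q (by have := Finset.mem_range.1 hq; omega), ← Finset.mul_sum]
      have := Int.alternating_sum_range_choose_of_ne hN.ne'
      have h0 : ∑ q ∈ Finset.range (N + 1), (-1 : ℂ) ^ q * (N.choose q : ℂ) = 0 := by
        exact_mod_cast congrArg (Int.cast : ℤ → ℂ) this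
      rw [h0, mul_zero]
  · rw [if_neg (by omega)]
    refine Finset.sum_eq_zero fun s hs => ?_
    have hs := Finset.mem_range.1 hs
    rcases Nat.lt_or_ge s l with h1 | h1
    · rw [slashCoeff_of_lt _ _ h1]; simp
    · rw [slashCoeff_of_lt c k₁ (show r - s < m by omega)]; simp

/-- Equation (2.6) of the paper: equivariance of the Rankin–Cohen operator
under the diagonal slash action of `SL₂(ℝ)`. -/
theorem rcOp_slash_equivariance (k₁ k₂ : ℤ) (r : ℕ) (f : ℂ → ℂ → ℂ)
    (hf : ContDiffOn ℝ (⊤ : ℕ∞) (Function.uncurry f)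
      {p : ℂ × ℂ | 0 < p.1.im ∧ 0 < p.2.im})
    (γ : Matrix.SpecialLinearGroup (Fin 2) ℝ) :
    ∀ τ : ℂ, 0 < τ.im →
      slashC (k₁ + k₂ + 2 * r) γ (rcOp (k₁ : ℚ) (k₂ : ℚ) r f) τ =
        rcOp (k₁ : ℚ) (k₂ : ℚ) r
          (fun τ₁ τ₂ => jfac γ τ₁ ^ (-k₁) * jfac γ τ₂ ^ (-k₂) *
            f (moeb γ τ₁) (moeb γ τ₂)) τ := by
  intro τ hτ
  have hj := jfac_ne_zero γ (z := τ) hτ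
  simp only [slashC, rcOp]
  rw [mul_left_comm]
  congr 1
  set X : ℕ → ℕ → ℂ := fun m l => (wdz1^[m] (wdz2^[l] f)) (moeb γ τ) (moeb γ τ) with hX
  set J : ℕ → ℕ → ℂ := fun m l => jfac γ τ ^ (-k₁ - k₂ - r - m - l) with hJ
  have hR : ∀ s ∈ Finset.range (r + 1),
      (-1 : ℂ) ^ s * ((gbinom ((k₁ : ℚ) + (r : ℚ) - 1) s : ℚ) : ℂ) *
        ((gbinom ((k₂ : ℚ) + (r : ℚ) - 1) (r - s) : ℚ) : ℂ) *
        (wdz1^[r - s] (wdz2^[s] (fun τ₁ τ₂ => jfac γ τ₁ ^ (-k₁) * jfac γ τ₂ ^ (-k₂) *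
            f (moeb γ τ₁) (moeb γ τ₂)))) τ τ =
      ∑ l ∈ Finset.range (r + 1), ∑ m ∈ Finset.range (r + 1), J m l * X m l *
        (rcCoeff k₁ k₂ r s *
          (slashCoeff (lowerC γ) k₂ s l * slashCoeff (lowerC γ) k₁ (r - s) m)) := by
    intro s hs
    have hs' : s ≤ r := Nat.lt_succ_iff.1 (Finset.mem_range.1 hs)
    rw [iter_slash_two γ k₁ k₂ hf (r - s) s hτ hτ, ← rcCoeff, Finset.mul_sum]
    have hlarge : ∀ l m : ℕ, rcCoeff k₁ k₂ r s *
        (slashCoeff (lowerC γ) k₂ s l * slashCoeff (lowerC γ) k₁ (r - s) m *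
        (jfac γ τ ^ (-k₂ - s - l) * jfac γ τ ^ (-k₁ - (r - s : ℕ) - m)) *
          (wdz1^[m] (wdz2^[l] f)) (moeb γ τ) (moeb γ τ)) =
        J m l * X m l * (rcCoeff k₁ k₂ r s *
          (slashCoeff (lowerC γ) k₂ s l * slashCoeff (lowerC γ) k₁ (r - s) m)) := by
      intro l m
      rw [← zpow_add₀ hj]
      simp only [hJ, hX]
      have : (-k₂ - (s : ℤ) - l + (-k₁ - (r - s : ℕ) - m)) = -k₁ - k₂ - r - m - l := by
        rw [Nat.cast_sub hs']; ring
      rw [this]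
      ring
    simp only [Finset.mul_sum, hlarge]
    -- both inner sums may be extended to `0, …, r`, since the added coefficients vanish
    refine (Finset.sum_congr rfl fun l _ => ?_).trans (Finset.sum_subset
      (Finset.range_mono (show s + 1 ≤ r + 1 by omega)) fun l _ hl => ?_)
    · refine Finset.sum_subset (Finset.range_mono (show r - s + 1 ≤ r + 1 by omega))
        fun m _ hm => ?_
      rw [slashCoeff_of_lt _ k₁ (by rw [Finset.mem_range] at hm; omega)]
      simp
    · refine Finset.sum_eq_zero fun m _ => ?_
      rw [slashCoeff_of_lt _ k₂ (by rw [Finset.mem_range] at hl; omega)]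
      simp
  rw [Finset.sum_congr rfl hR, Finset.sum_comm, Finset.mul_sum]
  refine Finset.sum_congr rfl fun l hl => ?_
  have hl' : l ≤ r := Nat.lt_succ_iff.1 (Finset.mem_range.1 hl)
  rw [Finset.sum_comm]
  simp only [← Finset.mul_sum, sum_rcCoeff]
  rw [Finset.sum_eq_single_of_mem (r - l) (Finset.mem_range.2 (by omega))
    fun m _ hm => by rw [if_neg (by omega), mul_zero], if_pos (by omega), ← rcCoeff]
  have : (-(k₁ + k₂ + 2 * (r : ℤ))) = -k₁ - k₂ - r - (r - l : ℕ) - l := by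
    rw [Nat.cast_sub hl']; ring
  simp only [hJ, hX, this]
  ring
end
end
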